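/- Let d ≥ 2 and define b : ℝ^d → ℝ^d by b(x) = -(d/2)|x|^{-2} x for x ≠ 0 and b(0) = 0. Then there exist no filtered probability space (Ω, 𝓕, (𝓕_t)_{t≥0}, P) carrying a d-dimensional Wiener process (w_t, 𝓕_t) together with a continuous (𝓕_t)-adapted process (x_t)_{t≥0} with x_0 = 0 such that almost surely, for all t ≥ 0, ∫_0^t |b(x_s)| ds < ∞ and x_t = w_t + ∫_0^t b(x_s) ds. -/

import Mathlib

/-!
Write `b` for the drift and let `y` be the `i`-th coordinate of a solution. If the Itô formula
could be applied to `cos (l y)`, taking expectations would give, for every frequency `l`,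

  `E cos (l y_t) - 1 = E ∫₀ᵗ (-l bᵢ(x_s) sin (l y_s) - (l² / 2) cos (l y_s)) ds`,

where the drift term is harmless although `b` is singular: `|l bᵢ(x) sin (l xᵢ)| ≤ (d / 2) l²`.
The whole argument consists of dividing this identity by `l²` and moving `l`.

* As `l → ∞` the left-hand side and the drift term vanish, so `E ∫₀¹ cos (l y_s) ds → 0`; taking
  Cesàro means over `l = 0, 1, 2, …` shows that `x` almost surely spends zero time at the origin.
* As `l → 0`, the sum of the right-hand sides over `i` converges to
  `-E ∫₀ᵗ (b(x_s) · x_s + d / 2) ds`, whose integrand is zero off the origin because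
  `b(x) · x = -d / 2` there. Hence `E ∑ᵢ (1 - cos (l x_tⁱ)) / l² → 0`, which forces `x_t = 0`
  almost surely for every `t ≤ 1` and contradicts the first point.

The cosine identity (`IsDrifted.cos_identity`) is proved without stochastic integrals. With
`A_t = ∫₀ᵗ bᵢ(x_s) ds` and `C_t = ∫₀ᵗ |b(x_s)| ds`, the process
`exp (i l (w_t + A_t) - ε C_t)` is the product of the exponential martingale
`N_t = exp (i l w_t + l² t / 2)` and the absolutely continuous process
`V_t = exp (i l A_t - ε C_t - l² t / 2)`. As `V_t - 1 = ∫₀ᵗ V'_s ds` and `E (N_t V'_s) = E (N_s V'_s)`,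
Fubini gives `E (N_t V_t) - 1 = E ∫₀ᵗ N_s V'_s ds` (`IsDrifted.exp_identity`). Since nothing is known
about the moments of `C_t`, the factor `exp (-ε C)` is what makes `V'` integrable; its
contribution disappears as `ε → 0` by dominated convergence.
-/

open MeasureTheory ProbabilityTheory

/-- A `d`-dimensional Wiener process relative to a filtration `𝓕`: a continuous
`𝓕`-adapted process starting at `0` such that for `0 ≤ s ≤ t` the increment
`w t - w s` is independent of `𝓕 s` and has the centered Gaussian distribution
on `ℝ^d` with covariance matrix `(t - s)` times the identity (i.e. its law is the
product of `d` one-dimensional centered Gaussians of variance `t - s`). -/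
structure IsWienerProcess {Ω : Type} {d : ℕ} [m : MeasurableSpace Ω] (P : Measure Ω)
    (𝓕 : ℝ → MeasurableSpace Ω) (w : ℝ → Ω → EuclideanSpace ℝ (Fin d)) : Prop where
  filtration_mono : ∀ s t : ℝ, s ≤ t → 𝓕 s ≤ 𝓕 t
  filtration_le : ∀ t : ℝ, 𝓕 t ≤ m
  adapted : ∀ t : ℝ, 0 ≤ t → @Measurable _ _ (𝓕 t) _ (w t)
  continuous_paths : ∀ ω, ContinuousOn (fun t => w t ω) (Set.Ici (0 : ℝ))
  start : ∀ ω, w 0 ω = 0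
  indep : ∀ s t : ℝ, 0 ≤ s → s ≤ t →
    Indep (MeasurableSpace.comap (fun ω => w t ω - w s ω) inferInstance) (𝓕 s) P
  gaussian_law : ∀ s t : ℝ, 0 ≤ s → s ≤ t →
    P.map (fun ω => (fun i => w t ω i - w s ω i)) =
      Measure.pi (fun _ : Fin d => gaussianReal 0 (Real.toNNReal (t - s)))

/-! ### Exponentials of primitives of integrable functions -/

/-- A function whose increments are dominated by those of an absolutely continuous function is
absolutely continuous. -/
lemma ac_of_dist_le {F : Type*} [NormedAddCommGroup F] {f : ℝ → F} {Q : ℝ → ℝ} {a b K : ℝ}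
    (hQ : AbsolutelyContinuousOnInterval Q a b)
    (h : ∀ u ∈ Set.uIcc a b, ∀ v ∈ Set.uIcc a b, dist (f u) (f v) ≤ K * dist (Q u) (Q v)) :
    AbsolutelyContinuousOnInterval f a b := by
  unfold AbsolutelyContinuousOnInterval at hQ ⊢
  have h0 := hQ.const_mul K
  rw [mul_zero] at h0
  refine squeeze_zero' (Filter.Eventually.of_forall fun E => Finset.sum_nonneg fun _ _ => dist_nonneg) ?_ h0
  have : ∀ᶠ (E : ℕ × (ℕ → ℝ × ℝ)) in AbsolutelyContinuousOnInterval.totalLengthFilter ⊓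
      Filter.principal (AbsolutelyContinuousOnInterval.disjWithin a b),
      E ∈ AbsolutelyContinuousOnInterval.disjWithin a b :=
    Filter.eventually_inf_principal.mpr (by simp)
  filter_upwards [this] with E hE
  rw [Finset.mul_sum]
  exact Finset.sum_le_sum fun i hi => h _ (hE.1 i hi).1 _ (hE.1 i hi).2

lemma cexp_lip {M : ℝ} {z w : ℂ} (hz : ‖z‖ ≤ M) (hw : ‖w‖ ≤ M) :
    ‖Complex.exp z - Complex.exp w‖ ≤ Real.exp M * ‖z - w‖ := by
  refine (convex_closedBall (0 : ℂ) M).norm_image_sub_le_of_norm_hasDerivWithin_le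
    (f := Complex.exp) (f' := Complex.exp)
    (fun x _ => (Complex.hasDerivAt_exp x).hasDerivWithinAt) (fun x hx => ?_) (by simpa using hw) (by simpa using hz)
  rw [Complex.norm_exp]
  exact Real.exp_le_exp.2 ((Complex.re_le_norm x).trans (by simpa using hx))

/-- The fundamental theorem of calculus for the exponential of the primitive of a merely integrable
function; it holds because this exponential is absolutely continuous. -/
lemma cexp_integral {h : ℝ → ℂ} {t : ℝ} (hh : IntervalIntegrable h volume 0 t) :
    Complex.exp (∫ s in (0:ℝ)..t, h s) - 1 =
      ∫ s in (0:ℝ)..t, h s * Complex.exp (∫ u in (0:ℝ)..s, h u) := by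
  set H : ℝ → ℂ := fun s => ∫ u in (0:ℝ)..s, h u with hH
  set Q : ℝ → ℝ := fun s => ∫ u in (0:ℝ)..s, ‖h u‖ with hQd
  have hint : ∀ u ∈ Set.uIcc 0 t, ∀ v ∈ Set.uIcc 0 t, IntervalIntegrable h volume u v :=
    fun u hu v hv => hh.mono_set (Set.uIcc_subset_uIcc hu hv)
  have h0 : (0:ℝ) ∈ Set.uIcc 0 t := by simp
  have hQ : AbsolutelyContinuousOnInterval Q 0 t :=
    hh.norm.absolutelyContinuousOnInterval_intervalIntegral (by simp)
  have hHd : ∀ u ∈ Set.uIcc 0 t, ∀ v ∈ Set.uIcc 0 t, dist (H u) (H v) ≤ dist (Q u) (Q v) := by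
    intro u hu v hv
    rw [dist_eq_norm, dist_eq_norm, hH, hQd]
    simp only
    rw [intervalIntegral.integral_interval_sub_left (hint _ h0 _ hu) (hint _ h0 _ hv),
      intervalIntegral.integral_interval_sub_left (hint _ h0 _ hu).norm (hint _ h0 _ hv).norm]
    exact intervalIntegral.norm_integral_le_abs_integral_norm
  have hHac : AbsolutelyContinuousOnInterval H 0 t :=
    ac_of_dist_le (K := 1) hQ (by simpa using hHd)
  obtain ⟨M, hM⟩ := hHac.exists_bound
  set V : ℝ → ℂ := fun s => Complex.exp (H s) with hV
  have hVb : ∀ s ∈ Set.uIcc 0 t, ‖V s‖ ≤ Real.exp M := by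
    intro s hs
    rw [hV]; simp only
    rw [Complex.norm_exp]
    exact Real.exp_le_exp.2 ((Complex.re_le_norm _).trans (hM s hs))
  have hVac : AbsolutelyContinuousOnInterval V 0 t := by
    refine ac_of_dist_le (K := Real.exp M) hQ fun u hu v hv => ?_
    rw [dist_eq_norm]
    refine (cexp_lip (hM u hu) (hM v hv)).trans ?_
    gcongr
    rw [← dist_eq_norm]
    exact hHd u hu v hv
  have hhV : IntervalIntegrable (fun s => h s * V s) volume 0 t :=
    hh.mul_continuousOn hVac.continuousOn
  set J : ℝ → ℂ := fun s => ∫ u in (0:ℝ)..s, h u * V u with hJ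
  have hJac : AbsolutelyContinuousOnInterval J 0 t := by
    have hQ' : AbsolutelyContinuousOnInterval (fun s => ∫ u in (0:ℝ)..s, ‖h u * V u‖) 0 t :=
      hhV.norm.absolutelyContinuousOnInterval_intervalIntegral (by simp)
    refine ac_of_dist_le (K := 1) hQ' fun u hu v hv => ?_
    have hi : ∀ u ∈ Set.uIcc 0 t, IntervalIntegrable (fun s => h s * V s) volume 0 u := fun u hu =>
      hhV.mono_set (Set.uIcc_subset_uIcc h0 hu)
    rw [dist_eq_norm, dist_eq_norm, hJ, one_mul]
    simp only
    rw [intervalIntegral.integral_interval_sub_left (hi _ hu) (hi _ hv),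
      intervalIntegral.integral_interval_sub_left (hi _ hu).norm (hi _ hv).norm]
    exact intervalIntegral.norm_integral_le_abs_integral_norm
  obtain ⟨C, hC⟩ := (hVac.sub hJac).const_of_ae_hasDerivAt_zero (by
    filter_upwards [hh.ae_hasDerivAt_integral, hhV.ae_hasDerivAt_integral] with s h1 h2 hs
    have a1 := (h1 hs 0 h0).cexp.sub (h2 hs 0 h0)
    convert! a1 using 1
    simp only [hV, hH]; ring)
  have c0 := hC 0 h0
  have ct := hC t (by simp)
  simp [hJ, hV, hH] at c0 ct
  rw [← c0] at ct
  linear_combination ct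

/-- For `q ≥ 0` this bounds the mass of `ε q exp (-ε ∫ q)` uniformly in `q`, `t` and `ε`: the integrand
is the derivative of `-exp (-ε ∫ q)`. -/
lemma integral_exp_primitive_le {q : ℝ → ℝ} {t : ℝ} (ht : 0 ≤ t)
    (hq : IntervalIntegrable q volume 0 t) (ε : ℝ) :
    ∫ s in Set.Ioc 0 t, ε * q s * Real.exp (-(ε * ∫ u in Set.Ioc 0 s, q u)) ≤ 1 := by
  have hc : IntervalIntegrable (fun s => ((-(ε * q s) : ℝ) : ℂ)) volume 0 t :=
    ⟨(hq.const_mul ε).neg.1.ofReal, (hq.const_mul ε).neg.2.ofReal⟩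
  have key := cexp_integral hc
  have h1 : ∀ s, 0 ≤ s → ∫ u in (0:ℝ)..s, ((-(ε * q u) : ℝ) : ℂ) =
      ((-(ε * ∫ u in Set.Ioc 0 s, q u) : ℝ) : ℂ) := by
    intro s hs
    rw [intervalIntegral.integral_ofReal, intervalIntegral.integral_of_le hs, integral_neg,
      integral_const_mul]
  rw [h1 t ht, intervalIntegral.integral_of_le ht] at key
  have h2 : ∫ s in Set.Ioc 0 t, ((-(ε * q s) : ℝ) : ℂ) *
      Complex.exp (∫ u in (0:ℝ)..s, ((-(ε * q u) : ℝ) : ℂ)) =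
      ((-∫ s in Set.Ioc 0 t, ε * q s * Real.exp (-(ε * ∫ u in Set.Ioc 0 s, q u)) : ℝ) : ℂ) := by
    rw [← integral_neg, ← integral_complex_ofReal]
    refine setIntegral_congr_fun measurableSet_Ioc fun s hs => ?_
    rw [h1 s hs.1.le]
    push_cast
    ring
  rw [h2] at key
  have := congrArg Complex.re key
  rw [← Complex.ofReal_exp, ← Complex.ofReal_one, ← Complex.ofReal_sub, Complex.ofReal_re,
    Complex.ofReal_re] at this
  linarith [Real.exp_pos (-(ε * ∫ u in Set.Ioc 0 t, q u))]

/-! ### The exponential formula for a drifted Wiener process -/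

/-- The data needed for the one-dimensional exponential formula: `W` is a Wiener process relative to
`𝓕` (without a continuity requirement), `β` is an adapted drift dominated by `q`, and almost every path of `q` is locally integrable.
All processes are jointly measurable, and the primitives of `β` and `q` are adapted. Time runs over
`ℝ`, and only nonnegative times matter. -/
structure IsDrifted {Ω : Type*} [m : MeasurableSpace Ω] (P : Measure Ω)
    (𝓕 : ℝ → MeasurableSpace Ω) (W β q : ℝ → Ω → ℝ) : Prop where
  le : ∀ t, 𝓕 t ≤ m
  mono : ∀ s t, s ≤ t → 𝓕 s ≤ 𝓕 t
  W_meas : ∀ t, 0 ≤ t → Measurable[𝓕 t] (W t)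
  W_joint : Measurable (Function.uncurry W)
  W_zero : ∀ ω, W 0 ω = 0
  indep : ∀ s t, 0 ≤ s → s ≤ t →
    Indep (MeasurableSpace.comap (fun ω => W t ω - W s ω) inferInstance) (𝓕 s) P
  law : ∀ s t, 0 ≤ s → s ≤ t → P.map (fun ω => W t ω - W s ω) = gaussianReal 0 (t - s).toNNReal
  β_meas : ∀ t, 0 ≤ t → Measurable[𝓕 t] (β t)
  q_meas : ∀ t, 0 ≤ t → Measurable[𝓕 t] (q t)
  β_joint : Measurable (Function.uncurry β)
  q_joint : Measurable (Function.uncurry q)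
  A_meas : ∀ t, 0 ≤ t → Measurable[𝓕 t] (fun ω => ∫ u in Set.Ioc 0 t, β u ω)
  C_meas : ∀ t, 0 ≤ t → Measurable[𝓕 t] (fun ω => ∫ u in Set.Ioc 0 t, q u ω)
  β_le : ∀ s ω, |β s ω| ≤ q s ω
  q_int : ∀ᵐ ω ∂P, ∀ t, 0 ≤ t → IntervalIntegrable (fun s => q s ω) volume 0 t

lemma measurable_primitive {Ω : Type*} [MeasurableSpace Ω] {q : ℝ → Ω → ℝ}
    (hq : Measurable (Function.uncurry q)) :
    Measurable (fun p : Ω × ℝ => ∫ u in Set.Ioc 0 p.2, q u p.1) := by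
  have : (fun p : Ω × ℝ => ∫ u in Set.Ioc 0 p.2, q u p.1) =
      fun p => ∫ u, (if 0 < u ∧ u ≤ p.2 then q u p.1 else 0) := by
    funext p
    rw [← integral_indicator measurableSet_Ioc]
    refine integral_congr_ae (Filter.Eventually.of_forall fun u => ?_)
    simp [Set.indicator_apply, Set.mem_Ioc]
  rw [this]
  refine (StronglyMeasurable.integral_prod_right (ν := volume)
    (f := fun (p : Ω × ℝ) u => if 0 < u ∧ u ≤ p.2 then q u p.1 else 0) ?_).measurable
  refine Measurable.stronglyMeasurable ?_
  refine Measurable.ite ?_ ?_ measurable_const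
  · exact (measurableSet_lt measurable_const measurable_snd).inter
      (measurableSet_le measurable_snd (measurable_snd.comp measurable_fst))
  · exact hq.comp (measurable_snd.prodMk (measurable_fst.comp measurable_fst))

lemma measurable_integrand {Ω : Type*} {mΩ : MeasurableSpace Ω} {b q A C : Ω → ℝ} (l ε s : ℝ)
    (hb : Measurable b) (hq : Measurable q) (hA : Measurable A) (hC : Measurable C) :
    Measurable (fun ω => (Complex.I * l * b ω - ε * q ω - l ^ 2 / 2) *
      Complex.exp (Complex.I * l * A ω - ε * C ω - l ^ 2 * s / 2)) := by
  fun_prop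

namespace IsDrifted
variable {Ω : Type*} [m : MeasurableSpace Ω] {P : Measure Ω}
    {𝓕 : ℝ → MeasurableSpace Ω} {W β q : ℝ → Ω → ℝ}

/-- The exponential martingale has increments of mean `1` (characteristic function of a Gaussian). -/
lemma integral_increment (h : IsDrifted P 𝓕 W β q) (l : ℝ) {s t : ℝ} (hs : 0 ≤ s) (hst : s ≤ t) :
    ∫ ω, Complex.exp (Complex.I * l * ((W t ω - W s ω : ℝ) : ℂ) + l ^ 2 * (t - s : ℝ) / 2) ∂P = 1 := by
  have hm : Measurable (fun ω => W t ω - W s ω) :=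
    ((h.W_meas t (hs.trans hst)).mono (h.le t) le_rfl).sub ((h.W_meas s hs).mono (h.le s) le_rfl)
  have hc := charFun_gaussianReal (μ := 0) (v := (t - s).toNNReal) l
  rw [← h.law s t hs hst, charFun_apply_real, integral_map hm.aemeasurable (by fun_prop)] at hc
  simp_rw [Complex.exp_add]
  rw [integral_mul_const]
  have e : ∀ ω, Complex.I * l * ((W t ω - W s ω : ℝ) : ℂ) = l * ((W t ω - W s ω : ℝ) : ℂ) * Complex.I :=
    fun ω => by ring
  simp_rw [e]
  rw [hc, ← Complex.exp_add, Real.coe_toNNReal _ (by linarith), ← Complex.exp_zero]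
  congr 1
  push_cast
  ring

/-- The martingale property of `exp (i l W + l² t / 2)`, tested against an `𝓕 s`-measurable variable.
No integrability of `D` is required: if one side is not integrable then neither is the other, and
both Bochner integrals are `0`. -/
lemma martingale_mul (h : IsDrifted P 𝓕 W β q) (l : ℝ) {s t : ℝ} (hs : 0 ≤ s) (hst : s ≤ t)
    {D : Ω → ℂ} (hD : Measurable[𝓕 s] D) :
    ∫ ω, Complex.exp (Complex.I * l * W t ω + l ^ 2 * t / 2) * D ω ∂P =
    ∫ ω, Complex.exp (Complex.I * l * W s ω + l ^ 2 * s / 2) * D ω ∂P := by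
  set R : Ω → ℂ := fun ω => Complex.exp (Complex.I * l * ((W t ω - W s ω : ℝ) : ℂ) + l ^ 2 * (t - s : ℝ) / 2)
  set Y : Ω → ℂ := fun ω => Complex.exp (Complex.I * l * W s ω + l ^ 2 * s / 2) * D ω
  have hY : Measurable[𝓕 s] Y := by
    have h1 : Measurable[𝓕 s] (W s) := h.W_meas s hs
    have h2 : Measurable (fun r : ℝ => Complex.exp (Complex.I * l * r + l ^ 2 * s / 2)) := by fun_prop
    exact (h2.comp h1).mul hD
  have hg : Measurable (fun r : ℝ => Complex.exp (Complex.I * l * (r : ℂ) + l ^ 2 * (t - s : ℝ) / 2)) := by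
    fun_prop
  have hm : Measurable (fun ω => W t ω - W s ω) :=
    ((h.W_meas t (hs.trans hst)).mono (h.le t) le_rfl).sub ((h.W_meas s hs).mono (h.le s) le_rfl)
  have hR : Measurable R := hg.comp hm
  have hind : IndepFun R Y P := by
    rw [IndepFun_iff_Indep]
    refine indep_of_indep_of_le_right (indep_of_indep_of_le_left (h.indep s t hs hst) ?_) hY.comap_le
    rintro _ ⟨B, hB, rfl⟩
    exact ⟨_, hg hB, rfl⟩
  have := hind.integral_fun_mul_eq_mul_integral hR.aestronglyMeasurable
    (hY.mono (h.le s) le_rfl).aestronglyMeasurable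
  rw [h.integral_increment l hs hst, one_mul] at this
  rw [← this]
  congr 1
  funext ω
  simp only [R, Y]
  rw [← mul_assoc, ← Complex.exp_add]
  congr 2
  push_cast
  ring

set_option maxHeartbeats 1000000 in
/-- The expectation of `exp (i l (W + ∫ β) - ε ∫ q)` as a time integral, together with the
integrability that allows Fubini's theorem to be applied to the right-hand side. The damping
`exp (-ε ∫ q)` makes this hold without any moment assumption on `∫ q`. -/
lemma exp_identity [IsProbabilityMeasure P] (h : IsDrifted P 𝓕 W β q) (l : ℝ) {ε : ℝ} (hε : 0 < ε)
    {t : ℝ} (ht : 0 ≤ t) :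
    Integrable (fun p : Ω × ℝ => (Complex.I * l * β p.2 p.1 - ε * q p.2 p.1 - l ^ 2 / 2) *
      Complex.exp (Complex.I * l * (W p.2 p.1 + ∫ u in Set.Ioc 0 p.2, β u p.1 : ℝ) -
        ε * (∫ u in Set.Ioc 0 p.2, q u p.1 : ℝ))) (P.prod (volume.restrict (Set.Ioc 0 t))) ∧
    ∫ ω, Complex.exp (Complex.I * l * (W t ω + ∫ u in Set.Ioc 0 t, β u ω : ℝ) -
        ε * (∫ u in Set.Ioc 0 t, q u ω : ℝ)) ∂P - 1 =
    ∫ ω, (∫ s in Set.Ioc 0 t, (Complex.I * l * β s ω - ε * q s ω - l ^ 2 / 2) *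
      Complex.exp (Complex.I * l * (W s ω + ∫ u in Set.Ioc 0 s, β u ω : ℝ) -
        ε * (∫ u in Set.Ioc 0 s, q u ω : ℝ))) ∂P := by
  obtain ⟨A, hA⟩ : ∃ A : ℝ → Ω → ℝ, ∀ s ω, ∫ u in Set.Ioc 0 s, β u ω = A s ω := ⟨_, fun _ _ => rfl⟩
  obtain ⟨C, hC⟩ : ∃ C : ℝ → Ω → ℝ, ∀ s ω, ∫ u in Set.Ioc 0 s, q u ω = C s ω := ⟨_, fun _ _ => rfl⟩
  simp only [hA, hC]
  obtain ⟨V, hV⟩ : ∃ V : ℝ → Ω → ℂ, V = fun s ω => Complex.exp (Complex.I * l * A s ω - ε * C s ω - l ^ 2 * s / 2) := ⟨_, rfl⟩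
  obtain ⟨N, hN⟩ : ∃ N : ℝ → Ω → ℂ, N = fun s ω => Complex.exp (Complex.I * l * W s ω + l ^ 2 * s / 2) := ⟨_, rfl⟩
  obtain ⟨D, hD⟩ : ∃ D : ℝ → Ω → ℂ, D = fun s ω => (Complex.I * l * β s ω - ε * q s ω - l ^ 2 / 2) * V s ω := ⟨_, rfl⟩
  -- `N` is the exponential martingale, `V` the absolutely continuous factor, and `D` its derivative.
  have hNV : ∀ s ω, Complex.exp (Complex.I * l * (W s ω + A s ω : ℝ) - ε * C s ω) = N s ω * V s ω := by
    intro s ω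
    simp only [hN, hV]
    rw [← Complex.exp_add]
    congr 1
    push_cast
    ring
  have hq0 : ∀ s ω, 0 ≤ q s ω := fun s ω => (abs_nonneg _).trans (h.β_le s ω)
  have hAj : Measurable (fun p : Ω × ℝ => A p.2 p.1) := by
    simpa only [hA] using measurable_primitive h.β_joint
  have hCj : Measurable (fun p : Ω × ℝ => C p.2 p.1) := by
    simpa only [hC] using measurable_primitive h.q_joint
  have hβj : Measurable (fun p : Ω × ℝ => β p.2 p.1) := h.β_joint.comp measurable_swap
  have hqj : Measurable (fun p : Ω × ℝ => q p.2 p.1) := h.q_joint.comp measurable_swap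
  have hWj : Measurable (fun p : Ω × ℝ => W p.2 p.1) := h.W_joint.comp measurable_swap
  have hVj : Measurable (fun p : Ω × ℝ => V p.2 p.1) := by
    have hg : Measurable (fun r : (ℝ × ℝ) × ℝ =>
      Complex.exp (Complex.I * l * r.1.1 - ε * r.1.2 - l ^ 2 * r.2 / 2)) := by fun_prop
    rw [hV]
    exact hg.comp ((hAj.prodMk hCj).prodMk measurable_snd)
  have hNj : Measurable (fun p : Ω × ℝ => N p.2 p.1) := by
    have hg : Measurable (fun r : ℝ × ℝ =>
      Complex.exp (Complex.I * l * r.1 + l ^ 2 * r.2 / 2)) := by fun_prop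
    rw [hN]
    exact hg.comp (hWj.prodMk measurable_snd)
  have hDj : Measurable (fun p : Ω × ℝ => D p.2 p.1) := by
    have hg : Measurable (fun r : ℝ × ℝ =>
      (Complex.I * l * (r.1 : ℂ) - ε * r.2 - l ^ 2 / 2)) := by fun_prop
    rw [hD]
    exact (hg.comp (hβj.prodMk hqj)).mul hVj
  have hNn : ∀ s ω, ‖N s ω‖ = Real.exp (l ^ 2 * s / 2) := by
    intro s ω
    simp only [hN]
    rw [Complex.norm_exp]
    congr 1
    have : Complex.I * l * W s ω + l ^ 2 * s / 2 = ((l ^ 2 * s / 2 : ℝ) : ℂ) + ((l * W s ω : ℝ) : ℂ) * Complex.I := by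
      push_cast; ring
    rw [this, Complex.add_re, Complex.ofReal_re, Complex.re_ofReal_mul, Complex.I_re]
    ring
  have hVn : ∀ s ω, ‖V s ω‖ = Real.exp (-(ε * C s ω) - l ^ 2 * s / 2) := by
    intro s ω
    simp only [hV]
    rw [Complex.norm_exp]
    congr 1
    have : Complex.I * l * A s ω - ε * C s ω - l ^ 2 * s / 2 =
        ((-(ε * C s ω) - l ^ 2 * s / 2 : ℝ) : ℂ) + ((l * A s ω : ℝ) : ℂ) * Complex.I := by
      push_cast; ring
    rw [this, Complex.add_re, Complex.ofReal_re, Complex.re_ofReal_mul, Complex.I_re]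
    ring
  have hC0 : ∀ s ω, 0 ≤ C s ω := fun s ω => by
    rw [← hC]; exact integral_nonneg fun u => hq0 u ω
  have hDn : ∀ s, 0 ≤ s → ∀ ω, ‖D s ω‖ ≤
      (|l| / ε + 1) * (ε * q s ω * Real.exp (-(ε * C s ω))) + l ^ 2 / 2 := by
    intro s hs ω
    simp only [hD]
    rw [norm_mul, hVn]
    have e1 : ‖Complex.I * l * β s ω - ε * q s ω - l ^ 2 / 2‖ ≤ |l| * q s ω + ε * q s ω + l ^ 2 / 2 := by
      refine (norm_sub_le _ _).trans (add_le_add ((norm_sub_le _ _).trans (add_le_add ?_ ?_)) ?_)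
      · simp only [norm_mul, Complex.norm_I, one_mul, Complex.norm_real, Real.norm_eq_abs]
        exact mul_le_mul_of_nonneg_left (h.β_le s ω) (abs_nonneg _)
      · simp [abs_of_pos hε, abs_of_nonneg (hq0 s ω)]
      · simp
    have e2 : Real.exp (-(ε * C s ω) - l ^ 2 * s / 2) ≤ Real.exp (-(ε * C s ω)) :=
      Real.exp_le_exp.2 (by linarith [mul_nonneg (sq_nonneg l) hs])
    have e3 : Real.exp (-(ε * C s ω)) ≤ 1 := Real.exp_le_one_iff.2 (by linarith [mul_nonneg hε.le (hC0 s ω)])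
    have hq := hq0 s ω
    calc _ ≤ (|l| * q s ω + ε * q s ω + l ^ 2 / 2) * Real.exp (-(ε * C s ω)) := by gcongr
      _ = (|l| / ε + 1) * (ε * q s ω * Real.exp (-(ε * C s ω))) + l ^ 2 / 2 * Real.exp (-(ε * C s ω)) := by
        field_simp
      _ ≤ _ := by nlinarith [sq_nonneg l]
  have hqe : ∀ ω, IntervalIntegrable (fun s => q s ω) volume 0 t →
      IntegrableOn (fun s => ε * q s ω * Real.exp (-(ε * C s ω))) (Set.Ioc 0 t) := by
    intro ω hω
    refine Integrable.mono' (hω.1.const_mul ε) ?_ (Filter.Eventually.of_forall fun s => ?_)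
    · have : Measurable fun s => ε * q s ω * Real.exp (-(ε * C s ω)) := by
        have a1 : Measurable fun s => q s ω := hqj.comp measurable_prodMk_left
        have a2 : Measurable fun s => C s ω := hCj.comp measurable_prodMk_left
        fun_prop
      exact this.aestronglyMeasurable
    · have e3 : Real.exp (-(ε * C s ω)) ≤ 1 := Real.exp_le_one_iff.2 (by linarith [mul_nonneg hε.le (hC0 s ω)])
      have := mul_nonneg hε.le (hq0 s ω)
      rw [Real.norm_eq_abs, abs_of_nonneg (by positivity)]
      nlinarith
  have hint : Integrable (fun p : Ω × ℝ => D p.2 p.1) (P.prod (volume.restrict (Set.Ioc 0 t))) := by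
    have hDω : ∀ᵐ ω ∂P, Integrable (fun s => D s ω) (volume.restrict (Set.Ioc 0 t)) ∧
        ∫ s in Set.Ioc 0 t, ‖D s ω‖ ≤ (|l| / ε + 1) + l ^ 2 / 2 * t := by
      filter_upwards [h.q_int] with ω hω
      have hb : Integrable (fun s => (|l| / ε + 1) * (ε * q s ω * Real.exp (-(ε * C s ω))) + l ^ 2 / 2)
          (volume.restrict (Set.Ioc 0 t)) := ((hqe ω (hω t ht)).const_mul _).add (integrable_const _)
      have hle : ∀ᵐ s ∂(volume.restrict (Set.Ioc 0 t)), ‖D s ω‖ ≤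
        (|l| / ε + 1) * (ε * q s ω * Real.exp (-(ε * C s ω))) + l ^ 2 / 2 :=
          (ae_restrict_iff' measurableSet_Ioc).2 (Filter.Eventually.of_forall fun s hs => hDn s hs.1.le ω)
      have hi : Integrable (fun s => D s ω) (volume.restrict (Set.Ioc 0 t)) :=
        Integrable.mono' hb (hDj.comp measurable_prodMk_left).aestronglyMeasurable hle
      refine ⟨hi, (integral_mono_ae hi.norm hb hle).trans ?_⟩
      rw [integral_add ((hqe ω (hω t ht)).const_mul _) (integrable_const _), integral_const_mul,
        integral_const]
      have := integral_exp_primitive_le ht (hω t ht) ε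
      simp only [hC] at this
      simp only [MeasurableSet.univ, measureReal_restrict_apply, Set.univ_inter, Real.volume_real_Ioc,
        sub_zero, max_eq_left ht, smul_eq_mul]
      have h3 : 0 ≤ |l| / ε + 1 := by positivity
      nlinarith [mul_le_mul_of_nonneg_left this h3]
    rw [integrable_prod_iff hDj.aestronglyMeasurable]
    refine ⟨hDω.mono fun ω hω => hω.1, ?_⟩
    refine Integrable.mono' (integrable_const ((|l| / ε + 1) + l ^ 2 / 2 * t)) ?_ ?_
    · exact (hDj.norm.stronglyMeasurable.integral_prod_right').aestronglyMeasurable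
    · filter_upwards [hDω] with ω hω
      rw [Real.norm_eq_abs, abs_of_nonneg (integral_nonneg fun _ => norm_nonneg _)]
      exact hω.2
  have hNt : Measurable (N t) :=
    hNj.comp (g := fun p : Ω × ℝ => N p.2 p.1) (measurable_prodMk_right (y := t))
  have hVt : Measurable (V t) :=
    hVj.comp (g := fun p : Ω × ℝ => V p.2 p.1) (measurable_prodMk_right (y := t))
  have hint1 : Integrable (fun p : Ω × ℝ => N t p.1 * D p.2 p.1) (P.prod (volume.restrict (Set.Ioc 0 t))) :=
    hint.bdd_mul (c := Real.exp (l ^ 2 * t / 2)) (hNt.comp measurable_fst).aestronglyMeasurable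
      (Filter.Eventually.of_forall fun p => (hNn t p.1).le)
  have hint2 : Integrable (fun p : Ω × ℝ => N p.2 p.1 * D p.2 p.1) (P.prod (volume.restrict (Set.Ioc 0 t))) := by
    refine hint.bdd_mul (c := Real.exp (l ^ 2 * t / 2)) hNj.aestronglyMeasurable ?_
    have : ∀ᵐ p ∂(P.prod (volume.restrict (Set.Ioc 0 t))), p.2 ∈ Set.Ioc 0 t :=
      Measure.quasiMeasurePreserving_snd.ae (ae_restrict_mem measurableSet_Ioc)
    filter_upwards [this] with p hp
    rw [hNn]
    exact Real.exp_le_exp.2 (by linarith [mul_le_mul_of_nonneg_left hp.2 (sq_nonneg l)])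
  have hNint : Integrable (N t) P := Integrable.mono' (integrable_const (Real.exp (l ^ 2 * t / 2)))
    hNt.aestronglyMeasurable (Filter.Eventually.of_forall fun ω => (hNn t ω).le)
  have hNVint : Integrable (fun ω => N t ω * V t ω) P := by
    refine Integrable.mono' (integrable_const 1) (hNt.mul hVt).aestronglyMeasurable
      (Filter.Eventually.of_forall fun ω => ?_)
    rw [norm_mul, hNn, hVn, ← Real.exp_add]
    exact Real.exp_le_one_iff.2 (by linarith [mul_nonneg hε.le (hC0 t ω)])
  have hEN : ∫ ω, N t ω ∂P = 1 := by
    have := h.integral_increment l le_rfl ht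
    rw [← this]
    simp [hN, h.W_zero]
  have hpath : ∀ᵐ ω ∂P, V t ω - 1 = ∫ s in Set.Ioc 0 t, D s ω := by
    filter_upwards [h.q_int] with ω hω
    have hqi : ∀ s, 0 ≤ s → IntervalIntegrable (fun s => (q s ω : ℂ)) volume 0 s := fun s hs =>
      ⟨(hω s hs).1.ofReal, (hω s hs).2.ofReal⟩
    have hβi' : ∀ s, 0 ≤ s → IntervalIntegrable (fun s => β s ω) volume 0 s := fun s hs =>
      (hω s hs).mono_fun' (hβj.comp measurable_prodMk_left).aestronglyMeasurable
        (Filter.Eventually.of_forall fun u => h.β_le u ω)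
    have hβi : ∀ s, 0 ≤ s → IntervalIntegrable (fun s => (β s ω : ℂ)) volume 0 s := fun s hs =>
      ⟨(hβi' s hs).1.ofReal, (hβi' s hs).2.ofReal⟩
    have hH : ∀ s, 0 ≤ s → ∫ u in (0:ℝ)..s, (Complex.I * l * β u ω - ε * q u ω - l ^ 2 / 2) =
        Complex.I * l * A s ω - ε * C s ω - l ^ 2 * s / 2 := by
      intro s hs
      rw [intervalIntegral.integral_sub (((hβi s hs).const_mul _).sub ((hqi s hs).const_mul _))
        (by simp), intervalIntegral.integral_sub ((hβi s hs).const_mul _) ((hqi s hs).const_mul _),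
        intervalIntegral.integral_const_mul, intervalIntegral.integral_const_mul,
        intervalIntegral.integral_ofReal, intervalIntegral.integral_ofReal,
        intervalIntegral.integral_const, intervalIntegral.integral_of_le hs,
        intervalIntegral.integral_of_le hs]
      simp only [hA, hC, sub_zero, Complex.real_smul]
      ring
    have hhi : IntervalIntegrable (fun s => Complex.I * l * β s ω - ε * q s ω - l ^ 2 / 2) volume 0 t :=
      (((hβi t ht).const_mul _).sub ((hqi t ht).const_mul _)).sub (by simp)
    have key := cexp_integral hhi
    rw [hH t ht, intervalIntegral.integral_of_le ht] at key
    simp only [hV] at key ⊢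
    rw [key]
    refine setIntegral_congr_fun measurableSet_Ioc fun s hs => ?_
    simp only [hD, hV]
    rw [hH s hs.1.le]
  have hDm : ∀ s, 0 ≤ s → Measurable[𝓕 s] (D s) := by
    intro s hs
    have a1 := h.β_meas s hs
    have a2 := h.q_meas s hs
    have a3 : Measurable[𝓕 s] (A s) := by simpa only [hA] using h.A_meas s hs
    have a4 : Measurable[𝓕 s] (C s) := by simpa only [hC] using h.C_meas s hs
    rw [hD, hV]
    exact measurable_integrand l ε s a1 a2 a3 a4
  refine ⟨hint2.congr (Filter.Eventually.of_forall fun p => ?_), ?_⟩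
  · simp only [hNV]
    simp only [hD]
    ring
  calc _ = ∫ ω, N t ω * V t ω ∂P - ∫ ω, N t ω ∂P := by
        rw [hEN]; congr 2; funext ω; exact hNV t ω
    _ = ∫ ω, (∫ s in Set.Ioc 0 t, N t ω * D s ω) ∂P := by
        rw [← integral_sub hNVint hNint]
        refine integral_congr_ae ?_
        filter_upwards [hpath] with ω hω
        rw [integral_const_mul, ← hω]
        ring
    _ = ∫ s in Set.Ioc 0 t, (∫ ω, N t ω * D s ω ∂P) := integral_integral_swap hint1
    _ = ∫ s in Set.Ioc 0 t, (∫ ω, N s ω * D s ω ∂P) := by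
        refine setIntegral_congr_fun measurableSet_Ioc fun s hs => ?_
        rw [hN]
        exact h.martingale_mul l hs.1.le hs.2 (hDm s hs.1.le)
    _ = ∫ ω, (∫ s in Set.Ioc 0 t, N s ω * D s ω) ∂P := (integral_integral_swap hint2).symm
    _ = _ := by
        congr 1; funext ω; congr 1; funext s
        rw [hNV]
        simp only [hD]
        ring

/-- Expectation of `cos (l y)` for `y = W + ∫ β`, as Itô's formula would predict, when the drift term
is bounded. It is the real part of `exp_identity` in the limit `ε → 0`. -/
lemma cos_identity [IsProbabilityMeasure P] (h : IsDrifted P 𝓕 W β q) (l : ℝ)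
    {t : ℝ} (ht : 0 ≤ t) {y : ℝ → Ω → ℝ} {K : ℝ}
    (hyj : Measurable (Function.uncurry y))
    (hy : ∀ᵐ ω ∂P, ∀ s, 0 ≤ s → y s ω = W s ω + ∫ u in Set.Ioc 0 s, β u ω)
    (hK : ∀ s ω, |l * β s ω * Real.sin (l * y s ω)| ≤ K) :
    ∫ ω, Real.cos (l * y t ω) ∂P - 1 =
    ∫ ω, (∫ s in Set.Ioc 0 t, (-(l * β s ω * Real.sin (l * y s ω)) -
      l ^ 2 / 2 * Real.cos (l * y s ω))) ∂P := by
  obtain ⟨C, hC⟩ : ∃ C : ℝ → Ω → ℝ, ∀ s ω, ∫ u in Set.Ioc 0 s, q u ω = C s ω := ⟨_, fun _ _ => rfl⟩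
  obtain ⟨g, hg⟩ : ∃ g : ℝ → Ω → ℝ, ∀ s ω, -(l * β s ω * Real.sin (l * y s ω)) -
      l ^ 2 / 2 * Real.cos (l * y s ω) = g s ω := ⟨_, fun _ _ => rfl⟩
  simp only [hg]
  have hq0 : ∀ s ω, 0 ≤ q s ω := fun s ω => (abs_nonneg _).trans (h.β_le s ω)
  have hC0 : ∀ s ω, 0 ≤ C s ω := fun s ω => by
    rw [← hC]; exact integral_nonneg fun u => hq0 u ω
  have hCj : Measurable (fun p : Ω × ℝ => C p.2 p.1) := by
    simpa only [hC] using measurable_primitive h.q_joint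
  have hβj : Measurable (fun p : Ω × ℝ => β p.2 p.1) := h.β_joint.comp measurable_swap
  have hqj : Measurable (fun p : Ω × ℝ => q p.2 p.1) := h.q_joint.comp measurable_swap
  have hyj : Measurable (fun p : Ω × ℝ => y p.2 p.1) := hyj.comp measurable_swap
  have hgj : Measurable (fun p : Ω × ℝ => g p.2 p.1) := by
    simp only [← hg]
    exact ((hβj.const_mul l).mul (Real.measurable_sin.comp (hyj.const_mul l))).neg.sub
      ((Real.measurable_cos.comp (hyj.const_mul l)).const_mul (l ^ 2 / 2))
  have hgb : ∀ s ω, |g s ω| ≤ K + l ^ 2 / 2 := by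
    intro s ω
    rw [← hg]
    refine (abs_sub _ _).trans (add_le_add ?_ ?_)
    · rw [abs_neg]; exact hK s ω
    · rw [abs_mul, abs_of_nonneg (by positivity)]
      exact mul_le_of_le_one_right (by positivity) (Real.abs_cos_le_one _)
  -- `f ε` is the real part of the integrand of `exp_identity`; it tends to `g` as `ε → 0`.
  obtain ⟨f, hf⟩ : ∃ f : ℝ → ℝ → Ω → ℝ, ∀ ε s ω, f ε s ω = Real.exp (-(ε * C s ω)) * g s ω -
      ε * q s ω * Real.exp (-(ε * C s ω)) * Real.cos (l * y s ω) := ⟨_, fun _ _ _ => rfl⟩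
  have hfj : ∀ ε, Measurable (fun p : Ω × ℝ => f ε p.2 p.1) := by
    intro ε
    simp only [hf]
    have he : Measurable (fun p : Ω × ℝ => Real.exp (-(ε * C p.2 p.1))) :=
      Real.measurable_exp.comp (hCj.const_mul ε).neg
    exact (he.mul hgj).sub (((hqj.const_mul ε).mul he).mul
      (Real.measurable_cos.comp (hyj.const_mul l)))
  have hlevel : ∀ ε, 0 < ε → ∫ ω, Real.exp (-(ε * C t ω)) * Real.cos (l * y t ω) ∂P - 1 =
      ∫ ω, (∫ s in Set.Ioc 0 t, f ε s ω) ∂P := by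
    intro ε hε
    obtain ⟨hi, he⟩ := h.exp_identity l hε ht
    simp only [hC] at hi he
    have hre := congrArg Complex.re he
    have hexp : ∀ (a c : ℝ), Complex.exp (Complex.I * l * a - ε * c) =
        (Real.exp (-(ε * c)) * Real.cos (l * a) : ℝ) +
        (Real.exp (-(ε * c)) * Real.sin (l * a) : ℝ) * Complex.I := by
      intro a c
      rw [show Complex.I * l * a - ε * c = ((-(ε * c) : ℝ) : ℂ) + ((l * a : ℝ) : ℂ) * Complex.I by
        push_cast; ring, Complex.exp_add, Complex.exp_mul_I, ← Complex.ofReal_exp,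
        ← Complex.ofReal_cos, ← Complex.ofReal_sin]
      push_cast; ring
    have hexp_re : ∀ a c : ℝ, (Complex.exp (Complex.I * l * a - ε * c)).re =
        Real.exp (-(ε * c)) * Real.cos (l * a) := by
      intro a c
      rw [hexp, Complex.add_re, Complex.re_ofReal_mul, Complex.ofReal_re, Complex.I_re]
      ring
    have hprod_re : ∀ b r a c : ℝ, ((Complex.I * l * b - ε * r - l ^ 2 / 2) *
        Complex.exp (Complex.I * l * a - ε * c)).re =
        Real.exp (-(ε * c)) * (-(l * b * Real.sin (l * a)) - (ε * r + l ^ 2 / 2) * Real.cos (l * a)) := by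
      intro b r a c
      have e : Complex.I * l * b - ε * r - l ^ 2 / 2 =
          ((-(ε * r + l ^ 2 / 2) : ℝ) : ℂ) + ((l * b : ℝ) : ℂ) * Complex.I := by
        push_cast; ring
      rw [e, hexp, Complex.mul_re, Complex.add_re, Complex.add_re, Complex.add_im, Complex.add_im,
        Complex.re_ofReal_mul, Complex.re_ofReal_mul, Complex.im_ofReal_mul, Complex.im_ofReal_mul]
      simp only [Complex.ofReal_re, Complex.ofReal_im, Complex.I_re, Complex.I_im]
      ring
    have hLint : Integrable (fun ω => Complex.exp (Complex.I * l *
        (W t ω + ∫ u in Set.Ioc 0 t, β u ω : ℝ) - ε * (C t ω : ℝ))) P := by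
      have hm : Measurable (fun r : ℝ × ℝ × ℝ =>
        Complex.exp (Complex.I * l * (r.1 + r.2.1 : ℝ) - ε * (r.2.2 : ℝ))) := by fun_prop
      have hWt : Measurable (W t) := (h.W_meas t ht).mono (h.le t) le_rfl
      have hAt : Measurable (fun ω => ∫ u in Set.Ioc 0 t, β u ω) :=
        (h.A_meas t ht).mono (h.le t) le_rfl
      have hCt : Measurable (fun ω => C t ω) := hCj.comp (measurable_prodMk_right (y := t))
      refine Integrable.mono' (integrable_const 1)
        (hm.comp (hWt.prodMk (hAt.prodMk hCt))).aestronglyMeasurable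
        (Filter.Eventually.of_forall fun ω => ?_)
      rw [Complex.norm_exp]
      refine Real.exp_le_one_iff.2 ?_
      have := mul_nonneg hε.le (hC0 t ω)
      simpa using this
    rw [Complex.sub_re, Complex.one_re, ← Complex.reCLM_apply, ← Complex.reCLM_apply,
      ← Complex.reCLM.integral_comp_comm hLint,
      ← Complex.reCLM.integral_comp_comm hi.integral_prod_left] at hre
    have e1 : ∫ ω, Real.exp (-(ε * C t ω)) * Real.cos (l * y t ω) ∂P =
        ∫ ω, Complex.reCLM (Complex.exp (Complex.I * l *
        (W t ω + ∫ u in Set.Ioc 0 t, β u ω : ℝ) - ε * (C t ω : ℝ))) ∂P := by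
      refine integral_congr_ae ?_
      filter_upwards [hy] with ω hω
      rw [Complex.reCLM_apply, hexp_re, hω t ht]
    rw [e1, hre]
    refine integral_congr_ae ?_
    filter_upwards [hy, hi.prod_right_ae] with ω hω hiω
    rw [← Complex.reCLM.integral_comp_comm hiω]
    refine setIntegral_congr_fun measurableSet_Ioc fun s hs => ?_
    rw [Complex.reCLM_apply, hprod_re, hf, ← hg, hω s hs.1.le]
    ring
  have hε0 : Filter.Tendsto (fun n : ℕ => 1 / ((n : ℝ) + 1)) Filter.atTop (nhds 0) :=
    tendsto_one_div_add_atTop_nhds_zero_nat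
  have hεp : ∀ n : ℕ, 0 < 1 / ((n : ℝ) + 1) := fun n => by positivity
  have hε1 : ∀ n : ℕ, 1 / ((n : ℝ) + 1) ≤ 1 := fun n => by
    rw [div_le_one (by positivity)]; linarith [Nat.cast_nonneg (α := ℝ) n]
  have hexp1 : ∀ n : ℕ, ∀ s ω, Real.exp (-(1 / ((n : ℝ) + 1) * C s ω)) ≤ 1 := fun n s ω =>
    Real.exp_le_one_iff.2 (by linarith [mul_nonneg (hεp n).le (hC0 s ω)])
  have hexpl : ∀ s ω, Filter.Tendsto (fun n : ℕ => Real.exp (-(1 / ((n : ℝ) + 1) * C s ω)))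
      Filter.atTop (nhds 1) := by
    intro s ω
    have := (Real.continuous_exp.tendsto _).comp ((hε0.mul_const (C s ω)).neg)
    simpa [Function.comp_def] using this
  have hCt : Measurable (fun ω => C t ω) := hCj.comp (measurable_prodMk_right (y := t))
  have hyt : Measurable (fun ω => y t ω) := hyj.comp (measurable_prodMk_right (y := t))
  have lim1 : Filter.Tendsto (fun n : ℕ =>
      ∫ ω, Real.exp (-(1 / ((n : ℝ) + 1) * C t ω)) * Real.cos (l * y t ω) ∂P - 1) Filter.atTop
      (nhds (∫ ω, Real.cos (l * y t ω) ∂P - 1)) := by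
    refine Filter.Tendsto.sub_const ?_ _
    refine tendsto_integral_of_dominated_convergence (fun _ => 1) (fun n => ?_) (integrable_const 1)
      (fun n => Filter.Eventually.of_forall fun ω => ?_) (Filter.Eventually.of_forall fun ω => ?_)
    · exact Measurable.aestronglyMeasurable (by fun_prop)
    · rw [norm_mul, Real.norm_eq_abs, Real.norm_eq_abs, Real.abs_exp]
      exact mul_le_one₀ (hexp1 n t ω) (abs_nonneg _) (Real.abs_cos_le_one _)
    · simpa using (hexpl t ω).mul_const (Real.cos (l * y t ω))
  have hK0 : 0 ≤ K + l ^ 2 / 2 := by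
    obtain ⟨ω⟩ : Nonempty Ω := nonempty_of_isProbabilityMeasure P
    exact (abs_nonneg _).trans (hgb 0 ω)
  have hfb : ∀ n : ℕ, ∀ s ω, |f (1 / ((n : ℝ) + 1)) s ω| ≤ (K + l ^ 2 / 2) +
      1 / ((n : ℝ) + 1) * q s ω * Real.exp (-(1 / ((n : ℝ) + 1) * C s ω)) := by
    intro n s ω
    rw [hf]
    have hnn : 0 ≤ 1 / ((n : ℝ) + 1) * q s ω * Real.exp (-(1 / ((n : ℝ) + 1) * C s ω)) :=
      mul_nonneg (mul_nonneg (hεp n).le (hq0 s ω)) (Real.exp_pos _).le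
    refine (abs_sub _ _).trans (add_le_add ?_ ?_)
    · rw [abs_mul, Real.abs_exp]
      exact (mul_le_of_le_one_left (abs_nonneg _) (hexp1 n s ω)).trans (hgb s ω)
    · rw [abs_mul, abs_of_nonneg hnn]
      exact mul_le_of_le_one_right hnn (Real.abs_cos_le_one _)
  have hqle : ∀ n : ℕ, ∀ s ω, 1 / ((n : ℝ) + 1) * q s ω * Real.exp (-(1 / ((n : ℝ) + 1) * C s ω)) ≤ q s ω := by
    intro n s ω
    have a1 : 1 / ((n : ℝ) + 1) * q s ω ≤ q s ω := mul_le_of_le_one_left (hq0 s ω) (hε1 n)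
    exact (mul_le_of_le_one_right (mul_nonneg (hεp n).le (hq0 s ω)) (hexp1 n s ω)).trans a1
  have hsec : ∀ {G : ℝ → Ω → ℝ}, Measurable (fun p : Ω × ℝ => G p.2 p.1) → ∀ ω,
      Measurable (fun s => G s ω) := fun hG ω => hG.comp (measurable_prodMk_left (x := ω))
  have lim2 : Filter.Tendsto (fun n : ℕ => ∫ ω, (∫ s in Set.Ioc 0 t, f (1 / ((n : ℝ) + 1)) s ω) ∂P)
      Filter.atTop (nhds (∫ ω, (∫ s in Set.Ioc 0 t, g s ω) ∂P)) := by
    refine tendsto_integral_of_dominated_convergence (fun _ => (K + l ^ 2 / 2) * t + 1) (fun n => ?_)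
      (integrable_const _) (fun n => ?_) ?_
    · exact ((hfj _).stronglyMeasurable.integral_prod_right').aestronglyMeasurable
    · filter_upwards [h.q_int] with ω hω
      have hqi : IntegrableOn (fun s => q s ω) (Set.Ioc 0 t) := (hω t ht).1
      have i2 : IntegrableOn (fun s => 1 / ((n : ℝ) + 1) * q s ω *
          Real.exp (-(1 / ((n : ℝ) + 1) * C s ω))) (Set.Ioc 0 t) := by
        refine Integrable.mono' hqi ?_ (Filter.Eventually.of_forall fun s => ?_)
        · have a1 := hsec hqj ω
          have a2 := hsec hCj ω
          exact Measurable.aestronglyMeasurable (by fun_prop)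
        · rw [Real.norm_eq_abs, abs_of_nonneg (mul_nonneg (mul_nonneg (hεp n).le (hq0 s ω)) (Real.exp_pos _).le)]
          exact hqle n s ω
      refine (norm_integral_le_of_norm_le ((integrable_const (K + l ^ 2 / 2)).add i2)
        (Filter.Eventually.of_forall fun s => hfb n s ω)).trans ?_
      simp only [Pi.add_apply]
      rw [integral_add (integrable_const _) i2, integral_const]
      have := integral_exp_primitive_le ht (hω t ht) (1 / ((n : ℝ) + 1))
      simp only [hC] at this
      simp only [MeasurableSet.univ, measureReal_restrict_apply, Set.univ_inter, Real.volume_real_Ioc,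
        sub_zero, max_eq_left ht, smul_eq_mul]
      linarith
    · filter_upwards [h.q_int] with ω hω
      have hqi : IntegrableOn (fun s => q s ω) (Set.Ioc 0 t) := (hω t ht).1
      refine tendsto_integral_of_dominated_convergence (fun s => (K + l ^ 2 / 2) + q s ω) (fun n => ?_)
        ((integrable_const _).add hqi) (fun n => Filter.Eventually.of_forall fun s => ?_)
        (Filter.Eventually.of_forall fun s => ?_)
      · exact (hsec (hfj _) ω).aestronglyMeasurable
      · exact (hfb n s ω).trans (by linarith [hqle n s ω])
      · simp only [hf]
        have a1 := (hexpl s ω).mul_const (g s ω)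
        have a2 := ((hε0.mul_const (q s ω)).mul (hexpl s ω)).mul_const (Real.cos (l * y s ω))
        simpa using a1.sub a2
  refine tendsto_nhds_unique lim1 (lim2.congr fun n => (hlevel _ (hεp n)).symm)

end IsDrifted

/-! ### Consequences of the cosine identity -/

/-- The `i`-th coordinate of the drift `-(d / 2) |x|⁻² x`. It vanishes at `x = 0`, through `0⁻¹ = 0`. -/
noncomputable def driftCoord {d : ℕ} (x : EuclideanSpace ℝ (Fin d)) (i : Fin d) : ℝ :=
  -((d : ℝ) / 2) * ((‖x‖ ^ 2)⁻¹ * x i)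

lemma abs_coord_le {d : ℕ} (x : EuclideanSpace ℝ (Fin d)) (i : Fin d) : |x i| ≤ ‖x‖ := by
  simpa using PiLp.norm_apply_le x i

/-- The sine cancels the singularity of the drift at the origin. -/
lemma abs_drift_sin_le {d : ℕ} (x : EuclideanSpace ℝ (Fin d)) (i : Fin d) (l : ℝ) :
    |l * driftCoord x i * Real.sin (l * x i)| ≤ (d : ℝ) / 2 * l ^ 2 := by
  have h1 : |Real.sin (l * x i)| ≤ |l * x i| := Real.abs_sin_le_abs
  have h2 : (‖x‖ ^ 2)⁻¹ * (x i) ^ 2 ≤ 1 := by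
    have : (x i) ^ 2 ≤ ‖x‖ ^ 2 := by
      rw [← sq_abs]; gcongr; exact abs_coord_le x i
    rw [inv_mul_eq_div]
    exact div_le_one_of_le₀ this (by positivity)
  have h0 : |driftCoord x i| = (d : ℝ) / 2 * ((‖x‖ ^ 2)⁻¹ * |x i|) := by
    unfold driftCoord
    rw [abs_mul, abs_neg, abs_mul, abs_of_nonneg (by positivity : (0:ℝ) ≤ (d : ℝ) / 2),
      abs_of_nonneg (by positivity : (0:ℝ) ≤ (‖x‖ ^ 2)⁻¹)]
  rw [abs_mul, abs_mul, h0]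
  calc |l| * ((d : ℝ) / 2 * ((‖x‖ ^ 2)⁻¹ * |x i|)) * |Real.sin (l * x i)|
      ≤ |l| * ((d : ℝ) / 2 * ((‖x‖ ^ 2)⁻¹ * |x i|)) * |l * x i| := by gcongr
    _ = (d : ℝ) / 2 * |l| ^ 2 * ((‖x‖ ^ 2)⁻¹ * |x i| ^ 2) := by rw [abs_mul]; ring
    _ = (d : ℝ) / 2 * l ^ 2 * ((‖x‖ ^ 2)⁻¹ * (x i) ^ 2) := by rw [sq_abs, sq_abs]
    _ ≤ (d : ℝ) / 2 * l ^ 2 * 1 := by gcongr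
    _ = _ := by ring

lemma measurable_driftCoord {d : ℕ} (i : Fin d) :
    Measurable (fun x : EuclideanSpace ℝ (Fin d) => driftCoord x i) := by
  unfold driftCoord
  fun_prop

lemma tendsto_sin_mul_div (y : ℝ) {l : ℕ → ℝ} (hl : Filter.Tendsto l Filter.atTop (nhds 0))
    (hl0 : ∀ n, l n ≠ 0) :
    Filter.Tendsto (fun n => Real.sin (l n * y) / l n) Filter.atTop (nhds y) := by
  have h1 : HasDerivAt (fun r : ℝ => Real.sin (r * y)) y 0 := by
    have := ((hasDerivAt_id (0:ℝ)).mul_const y).sin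
    simpa using this
  have h2 := h1.tendsto_slope_zero.comp
    (tendsto_nhdsWithin_iff.2 ⟨hl, Filter.Eventually.of_forall hl0⟩)
  refine h2.congr fun n => ?_
  simp [div_eq_inv_mul]

lemma one_sub_cos_div (y l : ℝ) :
    (1 - Real.cos (l * y)) / l ^ 2 = 2 * (Real.sin (l * (y / 2)) / l) ^ 2 := by
  have : Real.cos (l * y) = 1 - 2 * Real.sin (l * (y / 2)) ^ 2 := by
    rw [show l * y = 2 * (l * (y / 2)) by ring, Real.cos_two_mul, Real.cos_sq']
    ring
  rw [this, div_pow]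
  ring

/-- The Dirichlet kernel identity. -/
lemma sin_mul_sum_cos (y : ℝ) (n : ℕ) :
    2 * Real.sin (y / 2) * ∑ k ∈ Finset.range n, Real.cos (k * y) =
      Real.sin ((n - 1 / 2) * y) + Real.sin (y / 2) := by
  induction n with
  | zero => simp [show (-(2:ℝ)⁻¹ * y) = -(y / 2) by ring]
  | succ n ih =>
    rw [Finset.sum_range_succ, mul_add, ih]
    have e1 : ((n + 1 : ℕ) - 1 / 2 : ℝ) * y = n * y + y / 2 := by push_cast; ring
    have e2 : ((n : ℝ) - 1 / 2) * y = n * y - y / 2 := by ring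
    rw [e1, e2, Real.sin_add, Real.sin_sub]
    ring

/-- The Cesàro means of `cos (k y)` detect `y ∈ 2π ℤ`, in particular `y = 0`. -/
lemma tendsto_cesaro_cos (y : ℝ) :
    Filter.Tendsto (fun n : ℕ => (n : ℝ)⁻¹ * ∑ k ∈ Finset.range n, Real.cos (k * y)) Filter.atTop
      (nhds (if Real.sin (y / 2) = 0 then 1 else 0)) := by
  split_ifs with h
  · have hc : ∀ k : ℕ, Real.cos (k * y) = 1 := by
      obtain ⟨m, hm⟩ := Real.sin_eq_zero_iff.1 h
      intro k
      rw [show (k : ℝ) * y = ((k * m : ℤ) : ℝ) * (2 * Real.pi) by push_cast; linarith [congrArg (fun z => 2 * (k : ℝ) * z) hm]]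
      exact Real.cos_int_mul_two_pi _
    refine tendsto_const_nhds.congr' ?_
    filter_upwards [Filter.eventually_gt_atTop 0] with n hn
    have : (n : ℝ) ≠ 0 := by positivity
    simp [hc, this]
  · have hb : ∀ n : ℕ, |∑ k ∈ Finset.range n, Real.cos (k * y)| ≤ 1 / |Real.sin (y / 2)| := by
      intro n
      have hp : 0 < |Real.sin (y / 2)| := abs_pos.2 h
      rw [le_div_iff₀ hp]
      have := congrArg abs (sin_mul_sum_cos y n)
      rw [abs_mul, abs_mul, abs_two] at this
      have h2 := (abs_add_le (Real.sin ((n - 1 / 2) * y)) (Real.sin (y / 2)))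
      linarith [Real.abs_sin_le_one ((n - 1 / 2) * y), Real.abs_sin_le_one (y / 2)]
    have h0 : Filter.Tendsto (fun n : ℕ => (n : ℝ)⁻¹) Filter.atTop (nhds 0) :=
      tendsto_inv_atTop_nhds_zero_nat
    exact h0.zero_mul_isBoundedUnder_le (Filter.isBoundedUnder_of ⟨_, fun n => hb n⟩)

/-- The cosine identity for all frequencies is contradictory: large frequencies show that `X` spends no
time at the origin, small ones that `X` is at the origin at almost all times in `[0, 1]`. -/
lemma no_process_of_identity {Ω : Type*} [MeasurableSpace Ω] {P : Measure Ω} [IsProbabilityMeasure P]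
    {d : ℕ} (hd : 0 < d) {X : ℝ → Ω → EuclideanSpace ℝ (Fin d)}
    (hX : Measurable (fun p : Ω × ℝ => X p.2 p.1))
    (hid : ∀ (i : Fin d) (l t : ℝ), 0 ≤ t → ∫ ω, Real.cos (l * X t ω i) ∂P - 1 =
      ∫ ω, (∫ s in Set.Ioc 0 t, (-(l * driftCoord (X s ω) i * Real.sin (l * X s ω i)) -
        l ^ 2 / 2 * Real.cos (l * X s ω i))) ∂P) : False := by
  have hXi : ∀ i, Measurable (fun p : Ω × ℝ => X p.2 p.1 i) := fun i =>
    (by fun_prop : Measurable fun x : EuclideanSpace ℝ (Fin d) => x i).comp hX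
  have hBi : ∀ i, Measurable (fun p : Ω × ℝ => driftCoord (X p.2 p.1) i) := fun i =>
    (measurable_driftCoord i).comp hX
  have hXt : ∀ t, Measurable (fun ω => X t ω) := fun t =>
    hX.comp (measurable_prodMk_right (y := t))
  have hXti : ∀ t i, Measurable (fun ω => X t ω i) := fun t i =>
    (hXi i).comp (measurable_prodMk_right (y := t))
  have hsm : ∀ i l, Measurable (fun p : Ω × ℝ =>
      driftCoord (X p.2 p.1) i * (Real.sin (l * X p.2 p.1 i) / l)) := fun i l =>
    (hBi i).mul ((Real.measurable_sin.comp ((hXi i).const_mul l)).div_const l)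
  have hcm : ∀ i l, Measurable (fun p : Ω × ℝ => Real.cos (l * X p.2 p.1 i)) := fun i l =>
    Real.measurable_cos.comp ((hXi i).const_mul l)
  have hsb : ∀ i (l : ℝ) (p : Ω × ℝ), ‖driftCoord (X p.2 p.1) i * (Real.sin (l * X p.2 p.1 i) / l)‖ ≤
      (d : ℝ) / 2 := by
    intro i l p
    rcases eq_or_ne l 0 with rfl | hl
    · simp; positivity
    have h1 := abs_drift_sin_le (X p.2 p.1) i l
    have hl2 : 0 < l ^ 2 := by positivity
    rw [Real.norm_eq_abs]
    have e : l * driftCoord (X p.2 p.1) i * Real.sin (l * X p.2 p.1 i) =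
        l ^ 2 * (driftCoord (X p.2 p.1) i * (Real.sin (l * X p.2 p.1 i) / l)) := by field_simp
    rw [e, abs_mul, abs_of_pos hl2, mul_comm] at h1
    exact le_of_mul_le_mul_right h1 hl2
  have hcb : ∀ i (l : ℝ) (p : Ω × ℝ), ‖Real.cos (l * X p.2 p.1 i)‖ ≤ 1 := fun i l p =>
    Real.abs_cos_le_one _
  obtain ⟨μ, hμ⟩ : ∃ μ : ℝ → Measure (Ω × ℝ), ∀ t, μ t = P.prod (volume.restrict (Set.Ioc 0 t)) :=
    ⟨_, fun _ => rfl⟩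
  have hfin : ∀ t, IsFiniteMeasure (μ t) := fun t => by rw [hμ]; infer_instance
  have hsi : ∀ t i l, Integrable (fun p : Ω × ℝ =>
      driftCoord (X p.2 p.1) i * (Real.sin (l * X p.2 p.1 i) / l)) (μ t) := fun t i l =>
    Integrable.mono' (integrable_const _) (hsm i l).aestronglyMeasurable
      (Filter.Eventually.of_forall (hsb i l))
  have hci : ∀ t i l, Integrable (fun p : Ω × ℝ => Real.cos (l * X p.2 p.1 i)) (μ t) := fun t i l =>
    Integrable.mono' (integrable_const _) (hcm i l).aestronglyMeasurable
      (Filter.Eventually.of_forall (hcb i l))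
  have hid' : ∀ (i : Fin d) (l t : ℝ), l ≠ 0 → 0 ≤ t →
      (1 - ∫ ω, Real.cos (l * X t ω i) ∂P) / l ^ 2 =
      ∫ p, driftCoord (X p.2 p.1) i * (Real.sin (l * X p.2 p.1 i) / l) ∂(μ t) +
        1 / 2 * ∫ p, Real.cos (l * X p.2 p.1 i) ∂(μ t) := by
    intro i l t hl ht
    rw [← integral_const_mul, ← integral_add (hsi t i l) ((hci t i l).const_mul _), hμ,
      integral_prod _ (by rw [← hμ]; exact (hsi t i l).add ((hci t i l).const_mul _))]
    have := hid i l t ht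
    rw [div_eq_iff (by positivity), ← integral_mul_const]
    rw [show (1 - ∫ ω, Real.cos (l * X t ω i) ∂P) = -(∫ ω, Real.cos (l * X t ω i) ∂P - 1) by ring,
      this, ← integral_neg]
    congr 1
    funext ω
    rw [← integral_neg, ← integral_mul_const]
    congr 1
    funext s
    simp only
    field_simp
    ring
  have i0 : Fin d := ⟨0, hd⟩
  -- For large frequencies `(1 - E cos) / n ^ 2` and `sin (n y) / n` tend to `0`, so the identity
  -- leaves only the cosine average.
  have hhigh : Filter.Tendsto (fun n : ℕ => ∫ p, Real.cos (n * X p.2 p.1 i0) ∂(μ 1)) Filter.atTop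
      (nhds 0) := by
    have l1 : Filter.Tendsto (fun n : ℕ => (1 - ∫ ω, Real.cos (n * X 1 ω i0) ∂P) / (n : ℝ) ^ 2)
        Filter.atTop (nhds 0) := by
      have hz : Filter.Tendsto (fun n : ℕ => ((n : ℝ) ^ 2)⁻¹) Filter.atTop (nhds 0) := by
        have := (tendsto_inv_atTop_nhds_zero_nat (𝕜 := ℝ)).pow 2
        simpa using this
      have hbd : ∀ n : ℕ, |1 - ∫ ω, Real.cos (n * X 1 ω i0) ∂P| ≤ 2 := by
        intro n
        have : ‖∫ ω, Real.cos (n * X 1 ω i0) ∂P‖ ≤ 1 := by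
          refine (norm_integral_le_of_norm_le_const (C := 1)
            (Filter.Eventually.of_forall fun ω => Real.abs_cos_le_one _)).trans ?_
          simp
        refine (abs_sub _ _).trans ?_
        rw [Real.norm_eq_abs] at this
        rw [abs_one]
        linarith
      refine (hz.zero_mul_isBoundedUnder_le (Filter.isBoundedUnder_of ⟨2, fun n => hbd n⟩)).congr
        fun n => ?_
      rw [div_eq_inv_mul]
    have l2 : Filter.Tendsto (fun n : ℕ =>
        ∫ p, driftCoord (X p.2 p.1) i0 * (Real.sin (n * X p.2 p.1 i0) / n) ∂(μ 1))
        Filter.atTop (nhds 0) := by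
      have := tendsto_integral_of_dominated_convergence (μ := μ 1)
        (F := fun (n : ℕ) (p : Ω × ℝ) => driftCoord (X p.2 p.1) i0 * (Real.sin (n * X p.2 p.1 i0) / n))
        (f := fun _ => (0 : ℝ)) (fun _ => (d : ℝ) / 2)
        (fun n => (hsm i0 n).aestronglyMeasurable) (integrable_const _)
        (fun n => Filter.Eventually.of_forall fun p => hsb i0 n p)
        (Filter.Eventually.of_forall fun p => by
          have hz : Filter.Tendsto (fun n : ℕ => Real.sin (n * X p.2 p.1 i0) / n) Filter.atTop (nhds 0) := by
            refine ((tendsto_inv_atTop_nhds_zero_nat (𝕜 := ℝ)).zero_mul_isBoundedUnder_le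
              (Filter.isBoundedUnder_of ⟨1, fun n => Real.abs_sin_le_one (n * X p.2 p.1 i0)⟩)).congr
              fun n => ?_
            rw [div_eq_inv_mul]
          simpa using hz.const_mul (driftCoord (X p.2 p.1) i0))
      simpa using this
    have l3 := (l1.sub l2).const_mul 2
    rw [sub_zero, mul_zero] at l3
    refine l3.congr' ?_
    filter_upwards [Filter.eventually_gt_atTop 0] with n hn
    rw [hid' i0 n 1 (by positivity) zero_le_one]
    ring
  have hatom : ∀ᵐ p ∂(μ 1), X p.2 p.1 ≠ 0 := by
    have c1 := hhigh.cesaro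
    have c2 := tendsto_integral_of_dominated_convergence (μ := μ 1)
      (F := fun (n : ℕ) (p : Ω × ℝ) => (n : ℝ)⁻¹ * ∑ k ∈ Finset.range n, Real.cos (k * X p.2 p.1 i0))
      (f := fun p => if Real.sin (X p.2 p.1 i0 / 2) = 0 then (1 : ℝ) else 0) (fun _ => (1 : ℝ))
      (fun n => ((Finset.measurable_fun_sum (Finset.range n) fun (k : ℕ) _ => hcm i0 (k : ℝ)).const_mul _).aestronglyMeasurable)
      (integrable_const _)
      (fun n => Filter.Eventually.of_forall fun p => by
        rw [norm_mul, norm_inv, RCLike.norm_natCast]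
        have : ‖∑ k ∈ Finset.range n, Real.cos (k * X p.2 p.1 i0)‖ ≤ n := by
          refine (norm_sum_le_of_le (Finset.range n) fun (k : ℕ) _ => hcb i0 (k : ℝ) p).trans ?_
          simp
        calc _ ≤ (n : ℝ)⁻¹ * n := by gcongr
          _ ≤ 1 := inv_mul_le_one)
      (Filter.Eventually.of_forall fun p => tendsto_cesaro_cos _)
    have c3 : ∫ p, (if Real.sin (X p.2 p.1 i0 / 2) = 0 then (1 : ℝ) else 0) ∂(μ 1) = 0 := by
      refine tendsto_nhds_unique c2 (c1.congr fun n => ?_)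
      rw [integral_const_mul, integral_finsetSum (Finset.range n) fun (k : ℕ) _ => hci 1 i0 (k : ℝ)]
    rw [integral_eq_zero_iff_of_nonneg (fun p => by dsimp only; split_ifs <;> simp)] at c3
    · filter_upwards [c3] with p hp h0
      simp [h0] at hp
    · have hms : MeasurableSet {p : Ω × ℝ | Real.sin (X p.2 p.1 i0 / 2) = 0} :=
        (Real.measurable_sin.comp ((hXi i0).div_const 2)) (measurableSet_singleton 0)
      refine Integrable.mono' (integrable_const 1)
        (Measurable.ite hms measurable_const measurable_const).aestronglyMeasurable
        (Filter.Eventually.of_forall fun p => ?_)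
      split_ifs <;> simp
  -- For small frequencies the integrands, summed over the coordinates, tend to
  -- `b(x) · x + d / 2`, which is `0` away from the origin.
  have hl0 : Filter.Tendsto (fun n : ℕ => 1 / ((n : ℝ) + 1)) Filter.atTop (nhds 0) :=
    tendsto_one_div_add_atTop_nhds_zero_nat
  have hlp : ∀ n : ℕ, 1 / ((n : ℝ) + 1) ≠ 0 := fun n => by positivity
  obtain ⟨l, hl0, hlp⟩ : ∃ l : ℕ → ℝ, Filter.Tendsto l Filter.atTop (nhds 0) ∧ ∀ n, l n ≠ 0 :=
    ⟨_, hl0, hlp⟩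
  have hlow : ∀ t, 0 ≤ t → t ≤ 1 → Filter.Tendsto (fun n : ℕ => ∑ i : Fin d,
      (1 - ∫ ω, Real.cos (l n * X t ω i) ∂P) / l n ^ 2) Filter.atTop (nhds 0) := by
    intro t ht ht1
    have hat : ∀ᵐ p ∂(μ t), X p.2 p.1 ≠ 0 := by
      refine (Measure.absolutelyContinuous_of_le ?_).ae_le hatom
      rw [hμ, hμ]
      exact Measure.prod_mono le_rfl (Measure.restrict_mono (Set.Ioc_subset_Ioc_right ht1) le_rfl)
    have hF := tendsto_integral_of_dominated_convergence (μ := μ t)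
      (F := fun (n : ℕ) (p : Ω × ℝ) => ∑ i : Fin d, (driftCoord (X p.2 p.1) i *
        (Real.sin (l n * X p.2 p.1 i) / l n) + 1 / 2 * Real.cos (l n * X p.2 p.1 i)))
      (f := fun _ => (0 : ℝ)) (fun _ => ∑ i : Fin d, ((d : ℝ) / 2 + 1 / 2))
      (fun n => (Finset.measurable_fun_sum _ fun i _ =>
        (hsm i (l n)).add ((hcm i (l n)).const_mul _)).aestronglyMeasurable) (integrable_const _)
      (fun n => Filter.Eventually.of_forall fun p => by
        refine norm_sum_le_of_le _ fun i _ => (norm_add_le _ _).trans (add_le_add (hsb i _ p) ?_)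
        rw [norm_mul]
        have := hcb i (l n) p
        norm_num
        simpa using this)
      (by
        filter_upwards [hat] with p hp
        have hn : ‖X p.2 p.1‖ ^ 2 ≠ 0 := by positivity
        have e : (0 : ℝ) = ∑ i : Fin d, (driftCoord (X p.2 p.1) i * X p.2 p.1 i + 1 / 2 * 1) := by
          have hs := EuclideanSpace.real_norm_sq_eq (X p.2 p.1)
          rw [Finset.sum_add_distrib]
          have : ∑ i : Fin d, driftCoord (X p.2 p.1) i * X p.2 p.1 i =
              -((d : ℝ) / 2) * ((‖X p.2 p.1‖ ^ 2)⁻¹ * ∑ i : Fin d, (X p.2 p.1 i) ^ 2) := by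
            rw [Finset.mul_sum, Finset.mul_sum]
            refine Finset.sum_congr rfl fun i _ => ?_
            unfold driftCoord
            ring
          rw [this, ← hs, inv_mul_cancel₀ hn]
          simp
          ring
        rw [e]
        refine tendsto_finsetSum _ fun i _ => ?_
        refine ((tendsto_sin_mul_div _ hl0 hlp).const_mul _).add (Filter.Tendsto.const_mul _ ?_)
        have := (Real.continuous_cos.tendsto _).comp (hl0.mul_const (X p.2 p.1 i))
        simpa [Function.comp_def] using this)
    rw [integral_zero] at hF
    refine hF.congr fun n => ?_
    have hadd : ∀ i ∈ Finset.univ, Integrable (fun p : Ω × ℝ => driftCoord (X p.2 p.1) i *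
        (Real.sin (l n * X p.2 p.1 i) / l n) + 1 / 2 * Real.cos (l n * X p.2 p.1 i)) (μ t) :=
      fun i _ => (hsi t i _).add ((hci t i _).const_mul _)
    rw [integral_finsetSum _ hadd]
    refine Finset.sum_congr rfl fun i _ => ?_
    rw [hid' i _ t (hlp n) ht, integral_add (hsi t i _) ((hci t i _).const_mul _), integral_const_mul]
  have hzero : ∀ t, 0 ≤ t → t ≤ 1 → ∀ᵐ ω ∂P, X t ω = 0 := by
    intro t ht ht1
    have hcint : ∀ i n, Integrable (fun ω => (1 - Real.cos (l n * X t ω i)) / l n ^ 2) P := fun i n =>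
      ((integrable_const 1).sub (Integrable.mono' (integrable_const 1)
        (Real.measurable_cos.comp ((hXti t i).const_mul _)).aestronglyMeasurable
        (Filter.Eventually.of_forall fun ω => Real.abs_cos_le_one _))).div_const _
    have hnn : ∀ i n ω, 0 ≤ (1 - Real.cos (l n * X t ω i)) / l n ^ 2 := fun i n ω =>
      div_nonneg (by linarith [Real.cos_le_one (l n * X t ω i)]) (sq_nonneg _)
    have hEq : ∀ i n, ∫ ω, (1 - Real.cos (l n * X t ω i)) / l n ^ 2 ∂P =
        (1 - ∫ ω, Real.cos (l n * X t ω i) ∂P) / l n ^ 2 := by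
      intro i n
      have hcos : Integrable (fun ω => Real.cos (l n * X t ω i)) P :=
        Integrable.mono' (integrable_const 1)
          (Real.measurable_cos.comp ((hXti t i).const_mul _)).aestronglyMeasurable
          (Filter.Eventually.of_forall fun ω => Real.abs_cos_le_one _)
      rw [integral_div, integral_sub (integrable_const _) hcos]
      simp
    have hcoord : ∀ i, ∀ᵐ ω ∂P, X t ω i = 0 := by
      intro i
      have t1 : Filter.Tendsto (fun n => ∫ ω, (1 - Real.cos (l n * X t ω i)) / l n ^ 2 ∂P)
          Filter.atTop (nhds 0) := by
        refine squeeze_zero (fun n => integral_nonneg (hnn i n)) (fun n => ?_) (hlow t ht ht1)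
        rw [hEq]
        refine Finset.single_le_sum (f := fun i => (1 - ∫ ω, Real.cos (l n * X t ω i) ∂P) / l n ^ 2)
          (fun j _ => ?_) (Finset.mem_univ i)
        rw [← hEq]
        exact integral_nonneg (hnn j n)
      -- Truncation at `1` replaces Fatou's lemma by dominated convergence.
      have hminm : ∀ n, Measurable (fun ω => min ((1 - Real.cos (l n * X t ω i)) / l n ^ 2) 1) := fun n =>
        ((measurable_const.sub (Real.measurable_cos.comp ((hXti t i).const_mul _))).div_const _).min
          measurable_const
      have hminb : ∀ n ω, ‖min ((1 - Real.cos (l n * X t ω i)) / l n ^ 2) 1‖ ≤ 1 := fun n ω => by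
        rw [Real.norm_eq_abs, abs_of_nonneg (le_min (hnn i n ω) zero_le_one)]
        exact min_le_right _ _
      have t2 : Filter.Tendsto (fun n => ∫ ω, min ((1 - Real.cos (l n * X t ω i)) / l n ^ 2) 1 ∂P)
          Filter.atTop (nhds 0) :=
        squeeze_zero (fun n => integral_nonneg fun ω => le_min (hnn i n ω) zero_le_one)
          (fun n => integral_mono (Integrable.mono' (integrable_const 1) (hminm n).aestronglyMeasurable
            (Filter.Eventually.of_forall (hminb n))) (hcint i n) fun ω => min_le_left _ _) t1
      have t3 := tendsto_integral_of_dominated_convergence (μ := P)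
        (F := fun n ω => min ((1 - Real.cos (l n * X t ω i)) / l n ^ 2) 1)
        (f := fun ω => min (2 * (X t ω i / 2) ^ 2) 1) (fun _ => (1 : ℝ))
        (fun n => (hminm n).aestronglyMeasurable) (integrable_const _)
        (fun n => Filter.Eventually.of_forall (hminb n))
        (Filter.Eventually.of_forall fun ω => by
          simp only [one_sub_cos_div]
          exact (((tendsto_sin_mul_div _ hl0 hlp).pow 2).const_mul 2).min tendsto_const_nhds)
      have t4 := tendsto_nhds_unique t3 t2
      have hn0 : ∀ ω, 0 ≤ min (2 * (X t ω i / 2) ^ 2) 1 := fun ω => le_min (by positivity) zero_le_one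
      rw [integral_eq_zero_iff_of_nonneg hn0] at t4
      · filter_upwards [t4] with ω hω
        simp only [Pi.zero_apply] at hω
        by_contra hne
        have : 0 < min (2 * (X t ω i / 2) ^ 2) 1 := lt_min (by positivity) one_pos
        exact this.ne' hω
      · refine Integrable.mono' (integrable_const 1)
          (((((hXti t i).div_const 2).pow_const 2).const_mul 2).min measurable_const).aestronglyMeasurable
          (Filter.Eventually.of_forall fun ω => ?_)
        rw [Real.norm_eq_abs, abs_of_nonneg (hn0 ω)]
        exact min_le_right _ _
    filter_upwards [ae_all_iff.2 hcoord] with ω hω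
    ext i
    simpa using hω i
  have hms : MeasurableSet {p : Ω × ℝ | X p.2 p.1 = 0} := hX (measurableSet_singleton 0)
  have hall : ∀ᵐ p ∂(μ 1), X p.2 p.1 = 0 := by
    rw [ae_iff, hμ]
    change (P.prod _) {p : Ω × ℝ | X p.2 p.1 = 0}ᶜ = 0
    rw [Measure.prod_apply_symm hms.compl, lintegral_eq_zero_iff (measurable_measure_prodMk_right hms.compl)]
    refine (ae_restrict_iff' measurableSet_Ioc).2 (Filter.Eventually.of_forall fun s hs => ?_)
    exact ae_iff.1 (hzero s hs.1.le hs.2)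
  have hne : (ae (μ 1)).NeBot := by
    rw [hμ, ae_neBot]
    intro h0
    have h1 := Measure.measure_univ_eq_zero.2 h0
    rw [← Set.univ_prod_univ, Measure.prod_prod] at h1
    simp at h1
  obtain ⟨p, hp1, hp2⟩ := (hatom.and hall).exists
  exact hp1 hp2

/-! ### Reduction to the cosine identity -/

/-- Time integrals over `[0, t]` along a continuous adapted process are `𝓕 t`-measurable: stopping the
clock at `t` turns the integrand into a jointly `𝓕 t`-measurable function. -/
lemma measurable_integral_of_adapted {Ω E : Type*} [TopologicalSpace E]
    [TopologicalSpace.PseudoMetrizableSpace E] [MeasurableSpace E] [BorelSpace E]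
    {𝓕 : ℝ → MeasurableSpace Ω} (hmono : ∀ s t, s ≤ t → 𝓕 s ≤ 𝓕 t) {x : ℝ → Ω → E}
    (hxm : ∀ t, 0 ≤ t → Measurable[𝓕 t] (x t))
    (hxc : ∀ ω, ContinuousOn (fun t => x t ω) (Set.Ici (0 : ℝ)))
    {f : E → ℝ} (hf : Measurable f) {t : ℝ} (ht : 0 ≤ t) :
    Measurable[𝓕 t] (fun ω => ∫ u in Set.Ioc 0 t, f (x (max u 0) ω)) := by
  let _ : MeasurableSpace Ω := 𝓕 t
  have hj : Measurable (Function.uncurry fun u ω => x (max (min u t) 0) ω) := by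
    refine measurable_uncurry_of_continuous_of_measurable (fun ω => ?_) fun u => ?_
    · exact (hxc ω).comp_continuous (by fun_prop) fun u => Set.mem_Ici.2 (le_max_right _ _)
    · exact (hxm _ (le_max_right _ _)).mono (hmono _ _ (max_le (min_le_right _ _) ht)) le_rfl
  have e : (fun ω => ∫ u in Set.Ioc 0 t, f (x (max u 0) ω)) =
      fun ω => ∫ u in Set.Ioc 0 t, f (x (max (min u t) 0) ω) := by
    funext ω
    refine setIntegral_congr_fun measurableSet_Ioc fun u hu => ?_
    simp only [min_eq_left hu.2]
  rw [e]
  exact (StronglyMeasurable.integral_prod_right (ν := volume.restrict (Set.Ioc 0 t))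
    (f := fun ω u => f (x (max (min u t) 0) ω))
    ((hf.comp hj).comp measurable_swap).stronglyMeasurable).measurable

/-- For `b x = -(d/2)|x|⁻² x` (`b 0 = 0`) there is no filtered
probability space carrying a `d`-dimensional Wiener process `w` together with a
continuous adapted process `x` with `x 0 = 0` such that almost surely, for all
`t ≥ 0`, `∫₀ᵗ |b (x s)| ds < ∞` and `x t = w t + ∫₀ᵗ b (x s) ds`. -/
theorem no_solution_from_zero (d : ℕ) (hd : 2 ≤ d)
    (b : EuclideanSpace ℝ (Fin d) → EuclideanSpace ℝ (Fin d))
    (hb0 : b 0 = 0)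
    (hb : ∀ x : EuclideanSpace ℝ (Fin d), x ≠ 0 →
      b x = (-((d : ℝ) / 2) * ‖x‖ ^ (-2 : ℝ)) • x) :
    ∀ (Ω : Type) [MeasurableSpace Ω] (P : Measure Ω), IsProbabilityMeasure P →
    ∀ (𝓕 : ℝ → MeasurableSpace Ω) (w x : ℝ → Ω → EuclideanSpace ℝ (Fin d)),
      IsWienerProcess P 𝓕 w →
      (∀ t : ℝ, 0 ≤ t → @Measurable _ _ (𝓕 t) _ (x t)) →
      (∀ ω, ContinuousOn (fun t => x t ω) (Set.Ici (0 : ℝ))) →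
      (∀ ω, x 0 ω = 0) →
      ¬ (∀ᵐ ω ∂P, ∀ t : ℝ, 0 ≤ t →
          (∫⁻ s in Set.Ioc (0 : ℝ) t, ENNReal.ofReal ‖b (x s ω)‖) < ⊤ ∧
          x t ω = w t ω + ∫ s in Set.Ioc (0 : ℝ) t, b (x s ω)) := by
  intro Ω _ P hP 𝓕 w x hw hxm hxc _ hae
  have hbc : ∀ (z : EuclideanSpace ℝ (Fin d)) i, b z i = driftCoord z i := by
    intro z i
    unfold driftCoord
    rcases eq_or_ne z 0 with rfl | hz
    · simp [hb0]
    · rw [hb z hz, Real.rpow_neg (norm_nonneg _), Real.rpow_two, PiLp.smul_apply, smul_eq_mul,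
        mul_assoc]
  have hbm : Measurable b := by
    have : b = fun z => WithLp.toLp 2 fun i => driftCoord z i := by
      funext z
      ext i
      exact hbc z i
    rw [this]
    exact (WithLp.measurable_toLp 2 _).comp (measurable_pi_lambda _ measurable_driftCoord)
  -- Freezing time at `0` on the negative axis makes the paths continuous on the whole line.
  have hjoint : ∀ v : ℝ → Ω → EuclideanSpace ℝ (Fin d),
      (∀ t : ℝ, 0 ≤ t → Measurable[𝓕 t] (v t)) →
      (∀ ω, ContinuousOn (fun t => v t ω) (Set.Ici (0 : ℝ))) →
      Measurable (Function.uncurry fun s ω => v (max s 0) ω) := fun v hv hc =>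
    measurable_uncurry_of_continuous_of_measurable
      (fun ω => (hc ω).comp_continuous (by fun_prop) fun u => Set.mem_Ici.2 (le_max_right _ _))
      fun s => (hv _ (le_max_right _ _)).mono (hw.filtration_le _) le_rfl
  have hX := hjoint x hxm hxc
  have hW := hjoint w hw.adapted hw.continuous_paths
  have hproj : ∀ i, Measurable fun z : EuclideanSpace ℝ (Fin d) => z i := fun i => by fun_prop
  have hint : ∀ᵐ ω ∂P, ∀ t, 0 ≤ t → IntegrableOn (fun s => b (x (max s 0) ω)) (Set.Ioc 0 t) := by
    filter_upwards [hae] with ω hω t ht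
    refine ⟨(hbm.comp (hX.comp measurable_prodMk_right)).aestronglyMeasurable, ?_⟩
    rw [hasFiniteIntegral_iff_norm]
    refine lt_of_eq_of_lt (setLIntegral_congr_fun measurableSet_Ioc fun s hs => ?_) (hω t ht).1
    simp only [max_eq_left hs.1.le]
  have hdr : ∀ i, IsDrifted P 𝓕 (fun s ω => w (max s 0) ω i)
      (fun s ω => driftCoord (x (max s 0) ω) i) (fun s ω => ‖b (x (max s 0) ω)‖) := by
    intro i
    refine ⟨hw.filtration_le, hw.filtration_mono, fun t ht => ?_, (hproj i).comp hW, ?_, ?_, ?_,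
      fun t ht => ?_, fun t ht => ?_, (measurable_driftCoord i).comp hX, (hbm.norm).comp hX,
      fun t ht => measurable_integral_of_adapted hw.filtration_mono hxm hxc
        (measurable_driftCoord i) ht,
      fun t ht => measurable_integral_of_adapted hw.filtration_mono hxm hxc hbm.norm ht,
      fun s ω => ?_, ?_⟩
    · simp only [max_eq_left ht]
      exact (hproj i).comp (hw.adapted t ht)
    · intro ω
      simp [hw.start ω]
    · intro s t hs hst
      simp only [max_eq_left hs, max_eq_left (hs.trans hst)]
      refine indep_of_indep_of_le_left (hw.indep s t hs hst) ?_
      rintro _ ⟨B, hB, rfl⟩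
      exact ⟨_, hproj i hB, rfl⟩
    · intro s t hs hst
      simp only [max_eq_left hs, max_eq_left (hs.trans hst)]
      have hm : Measurable fun ω => (fun j => w t ω j - w s ω j) := by
        refine measurable_pi_lambda _ fun j => ?_
        exact ((hproj j).comp ((hw.adapted t (hs.trans hst)).mono (hw.filtration_le _) le_rfl)).sub
          ((hproj j).comp ((hw.adapted s hs).mono (hw.filtration_le _) le_rfl))
      have he := (measurePreserving_eval
        (fun _ : Fin d => gaussianReal 0 (Real.toNNReal (t - s))) i).map_eq
      rw [← hw.gaussian_law s t hs hst, Measure.map_map (measurable_pi_apply i) hm] at he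
      exact he
    · simp only [max_eq_left ht]
      exact (measurable_driftCoord i).comp (hxm t ht)
    · simp only [max_eq_left ht]
      exact hbm.norm.comp (hxm t ht)
    · rw [← hbc]
      exact abs_coord_le _ i
    · filter_upwards [hint] with ω hω t ht
      rw [intervalIntegrable_iff_integrableOn_Ioc_of_le ht]
      exact (hω t ht).norm
  refine no_process_of_identity (P := P) (d := d) (by omega) (X := fun s ω => x (max s 0) ω)
    (hX.comp measurable_swap) fun i l t ht => ?_
  refine (hdr i).cos_identity l ht (y := fun s ω => x (max s 0) ω i) ((hproj i).comp hX) ?_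
    (fun s ω => abs_drift_sin_le (x (max s 0) ω) i l)
  filter_upwards [hae, hint] with ω hω hi s hs
  have h1 := (EuclideanSpace.proj (𝕜 := ℝ) i).integral_comp_comm (hi s hs)
  have h2 : ∫ u in Set.Ioc 0 s, b (x u ω) = ∫ u in Set.Ioc 0 s, b (x (max u 0) ω) :=
    setIntegral_congr_fun measurableSet_Ioc fun u hu => by simp only [max_eq_left hu.1.le]
  simp only [EuclideanSpace.coe_proj, hbc] at h1
  simp only [max_eq_left hs]
  rw [h1, ← h2, ← PiLp.add_apply, ← (hω s hs).2]
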